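/- Let T_D be shifted exponential with rate λ_d > 0, shift c ≥ 0, independent of T_N(K) (K-th order statistic of N i.i.d. shifted exponentials with rate λ_s, shift c). Then the conditional second moment satisfies E[T_N(K)² | T_N(K) ≤ T_D] = (1/R_K)·Σ_{j=0}^{K-1} B_{K,j}·λ_s·(c²H_{K,j}² + 2cH_{K,j} + 2)/H_{K,j}³, where B_{K,j} = K·binom(N,K)·binom(K-1,j)·(-1)^j, H_{K,j} = λ_s(N-K+1+j) + λ_d, and R_K = P(T_N(K) ≤ T_D). -/

import Mathlib

open MeasureTheory ProbabilityTheory Real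

/-- The shifted exponential distribution with rate `l` and shift `c`:
density `l * exp (-l*(t-c))` for `t > c`, `0` otherwise. -/
noncomputable def shiftedExp (l c : ℝ) : MeasureTheory.Measure ℝ :=
  MeasureTheory.volume.withDensity
    (fun t => ENNReal.ofReal (if c < t then l * Real.exp (-l * (t - c)) else 0))

/-- The `K`-th order statistic (K-th smallest value) of the family `T` evaluated at `ω`. -/
noncomputable def orderStat {Ω : Type*} {N : ℕ} (T : Fin N → Ω → ℝ) (K : ℕ) (ω : Ω) : ℝ :=
  sInf {x : ℝ | K ≤ Nat.card {i : Fin N // T i ω ≤ x}}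

open Set in
theorem shiftedExp_eq_withDensity (l c : ℝ) :
    shiftedExp l c = (volume.restrict (Ioi c)).withDensity
      (fun t => ENNReal.ofReal (l * exp (-l * (t - c)))) := by
  rw [shiftedExp, ← withDensity_indicator measurableSet_Ioi]
  congr 1
  ext t
  by_cases h : c < t <;> simp [indicator, h]

theorem tendsto_exp_neg_mul_sub_atTop {l : ℝ} (hl : 0 < l) (c : ℝ) :
    Filter.Tendsto (fun t => exp (-l * (t - c))) Filter.atTop (nhds 0) := by
  refine tendsto_exp_atBot.comp ?_
  have h : Filter.Tendsto (fun t : ℝ => t - c) Filter.atTop Filter.atTop :=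
    Filter.tendsto_atTop_add_const_right _ _ Filter.tendsto_id
  exact h.const_mul_atTop_of_neg (by linarith)

theorem hasDerivAt_exp_neg_mul_sub (l c t : ℝ) :
    HasDerivAt (fun t => exp (-l * (t - c))) (-l * exp (-l * (t - c))) t := by
  refine (((hasDerivAt_id t).sub_const c).const_mul (-l)).exp.congr_deriv ?_
  simp only [id]
  ring

theorem lintegral_Ioi_exp_neg_mul_sub {l : ℝ} (hl : 0 < l) (c x : ℝ) :
    ∫⁻ t in Set.Ioi x, ENNReal.ofReal (l * exp (-l * (t - c)))
      = ENNReal.ofReal (exp (-l * (x - c))) := by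
  have hd : ∀ t ∈ Set.Ici x,
      HasDerivAt (fun t => -exp (-l * (t - c))) (l * exp (-l * (t - c))) t := fun t _ =>
    (hasDerivAt_exp_neg_mul_sub l c t).neg.congr_deriv (by ring)
  have hlim := (tendsto_exp_neg_mul_sub_atTop hl c).neg
  have hpos : ∀ t ∈ Set.Ioi x, 0 ≤ l * exp (-l * (t - c)) := fun t _ => by positivity
  rw [← ofReal_integral_eq_lintegral_ofReal (integrableOn_Ioi_deriv_of_nonneg' hd hpos hlim)
    (Filter.Eventually.of_forall fun t => by positivity),
    integral_Ioi_of_hasDerivAt_of_nonneg' hd hpos hlim]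
  simp

theorem shiftedExp_Ici {l c x : ℝ} (hl : 0 < l) (hx : c ≤ x) :
    shiftedExp l c (Set.Ici x) = ENNReal.ofReal (exp (-l * (x - c))) := by
  rw [shiftedExp_eq_withDensity, withDensity_apply _ measurableSet_Ici,
    setLIntegral_congr Ioi_ae_eq_Ici.symm, Measure.restrict_restrict measurableSet_Ioi,
    Set.Ioi_inter_Ioi, sup_eq_left.2 hx, lintegral_Ioi_exp_neg_mul_sub hl]

theorem shiftedExp_Iic_of_le {l c x : ℝ} (hx : x ≤ c) : shiftedExp l c (Set.Iic x) = 0 := by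
  rw [shiftedExp_eq_withDensity, withDensity_apply _ measurableSet_Iic,
    Measure.restrict_restrict measurableSet_Iic, Set.Iic_inter_Ioi, Set.Ioc_eq_empty hx.not_gt]
  simp

theorem isProbabilityMeasure_shiftedExp {l : ℝ} (hl : 0 < l) (c : ℝ) :
    IsProbabilityMeasure (shiftedExp l c) := by
  constructor
  rw [shiftedExp_eq_withDensity, withDensity_apply _ MeasurableSet.univ, Measure.restrict_univ,
    lintegral_Ioi_exp_neg_mul_sub hl]
  simp

theorem shiftedExp_real_Iic {l c x : ℝ} (hl : 0 < l) (hx : c ≤ x) :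
    (shiftedExp l c).real (Set.Iic x) = 1 - exp (-l * (x - c)) := by
  have := isProbabilityMeasure_shiftedExp hl c
  have hac : shiftedExp l c ≪ volume := withDensity_absolutelyContinuous _ _
  rw [← Set.compl_Ioi, probReal_compl_eq_one_sub measurableSet_Ioi, measureReal_def,
    measure_congr (hac.ae_eq Ioi_ae_eq_Ici), shiftedExp_Ici hl hx,
    ENNReal.toReal_ofReal (exp_pos _).le]

theorem orderStat_le_iff {Ω : Type*} {N K : ℕ} (hK : 1 ≤ K) (hKN : K ≤ N)
    (T : Fin N → Ω → ℝ) (ω : Ω) (x : ℝ) :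
    orderStat T K ω ≤ x ↔ K ≤ Nat.card {i : Fin N // T i ω ≤ x} := by
  have hmono : ∀ {y z : ℝ}, (∀ i, T i ω ≤ y → T i ω ≤ z) →
      Nat.card {i : Fin N // T i ω ≤ y} ≤ Nat.card {i : Fin N // T i ω ≤ z} := fun h =>
    Nat.card_le_card_of_injective (Subtype.map id h)
      (Subtype.map_injective h Function.injective_id)
  have hfin := Set.finite_range fun i => T i ω
  constructor
  · intro h
    have hev : ∀ᶠ y in nhdsWithin x (Set.Ioi x), ∀ i, T i ω ≤ y → T i ω ≤ x := by
      refine Filter.eventually_all.2 fun i => ?_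
      rcases le_or_gt (T i ω) x with hi | hi
      · exact Filter.Eventually.of_forall fun _ _ => hi
      · filter_upwards [mem_nhdsWithin_of_mem_nhds (Iio_mem_nhds hi)] with y hy hy'
        exact absurd hy' (not_le.2 hy)
    obtain ⟨y, hy, hxy⟩ := (hev.and self_mem_nhdsWithin).exists
    have hne : {x : ℝ | K ≤ Nat.card {i : Fin N // T i ω ≤ x}}.Nonempty := by
      obtain ⟨b, hb⟩ := hfin.bddAbove
      refine ⟨b, ?_⟩
      have : ∀ i, T i ω ≤ b := fun i => hb ⟨i, rfl⟩
      simpa [this] using hKN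
    obtain ⟨z, hz, hzy⟩ := exists_lt_of_csInf_lt hne (h.trans_lt hxy)
    exact hz.trans (hmono fun i hi => hy i (hi.trans hzy.le))
  · intro h
    refine csInf_le ?_ h
    obtain ⟨b, hb⟩ := hfin.bddBelow
    refine ⟨b, fun y hy => ?_⟩
    have : 0 < Nat.card {i : Fin N // T i ω ≤ y} := by
      have : K ≤ Nat.card {i : Fin N // T i ω ≤ y} := hy
      omega
    obtain ⟨⟨i, hi⟩⟩ := (Nat.card_pos_iff.1 this).1
    exact (hb ⟨i, rfl⟩).trans hi

theorem setOf_le_card_eq_biUnion {N : ℕ} (K : ℕ) (A : Set ℝ) :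
    {t : Fin N → ℝ | K ≤ Nat.card {i // t i ∈ A}} =
      ⋃ s ∈ (Finset.univ : Finset (Finset (Fin N))).filter (fun s => K ≤ s.card),
        Set.univ.pi fun i => if i ∈ s then A else Aᶜ := by
  classical
  ext t
  simp only [Set.mem_ofPred_eq, Set.mem_iUnion, Finset.mem_filter, Finset.mem_univ, true_and,
    Set.mem_univ_pi, exists_prop, Nat.card_eq_fintype_card, Fintype.card_subtype]
  constructor
  · intro h
    refine ⟨_, h, fun i => ?_⟩
    by_cases hi : t i ∈ A <;> simp [hi]
  · rintro ⟨s, hs, h⟩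
    convert hs using 2
    ext i
    have := h i
    by_cases hi : i ∈ s <;> simp_all

theorem measurableSet_setOf_le_card {N : ℕ} (K : ℕ) {A : Set ℝ} (hA : MeasurableSet A) :
    MeasurableSet {t : Fin N → ℝ | K ≤ Nat.card {i // t i ∈ A}} := by
  rw [setOf_le_card_eq_biUnion]
  refine Finset.measurableSet_biUnion _ fun s _ => MeasurableSet.univ_pi fun i => ?_
  split_ifs
  exacts [hA, hA.compl]

theorem pi_real_setOf_le_card {N : ℕ} (K : ℕ) {A : Set ℝ} (hA : MeasurableSet A)
    (ν : Measure ℝ) [IsProbabilityMeasure ν] :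
    (Measure.pi fun _ : Fin N => ν).real {t | K ≤ Nat.card {i // t i ∈ A}} =
      (∑ m ∈ Finset.Ico K (N + 1), bernsteinPolynomial ℝ N m).eval (ν.real A) := by
  classical
  rw [setOf_le_card_eq_biUnion, measureReal_biUnion_finset]
  · have hbox : ∀ s : Finset (Fin N),
        (Measure.pi fun _ : Fin N => ν).real (Set.univ.pi fun i => if i ∈ s then A else Aᶜ) =
          ν.real A ^ s.card * (1 - ν.real A) ^ (N - s.card) := by
      intro s
      rw [measureReal_def, Measure.pi_pi, ENNReal.toReal_prod]
      have : ∀ i, (ν (if i ∈ s then A else Aᶜ)).toReal =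
          if i ∈ s then ν.real A else 1 - ν.real A := fun i => by
        split_ifs
        · rfl
        · exact probReal_compl_eq_one_sub hA
      simp_rw [this, Finset.prod_ite, Finset.prod_const]
      congr 2
      · simp
      · rw [Finset.filter_not, Finset.card_sdiff]
        simp
    simp_rw [hbox, Finset.sum_filter]
    have := Finset.sum_powerset_apply_card (fun m => if K ≤ m then
      ν.real A ^ m * (1 - ν.real A) ^ (N - m) else 0) (x := (Finset.univ : Finset (Fin N)))
    rw [Finset.powerset_univ] at this
    rw [this, Polynomial.eval_finsetSum, Finset.card_univ, Fintype.card_fin]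
    have hI : Finset.Ico K (N + 1) = (Finset.range (N + 1)).filter (fun m => K ≤ m) := by
      ext m; simp [and_comm]
    rw [hI, Finset.sum_filter]
    refine Finset.sum_congr rfl fun m _ => ?_
    split_ifs <;> simp [bernsteinPolynomial, mul_assoc]
  · intro s _ s' _ hne
    refine Set.disjoint_left.2 fun t ht ht' => hne ?_
    ext i
    have h := ht i trivial
    have h' := ht' i trivial
    by_cases hi : i ∈ s <;> by_cases hi' : i ∈ s' <;> simp_all
  · intro s _
    refine MeasurableSet.univ_pi fun i => ?_
    split_ifs
    exacts [hA, hA.compl]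

open Polynomial in
theorem derivative_sum_bernsteinPolynomial {N K : ℕ} (hK : 1 ≤ K) (hKN : K ≤ N) :
    derivative (∑ m ∈ Finset.Ico K (N + 1), bernsteinPolynomial ℝ N m) =
      C ((K : ℝ) * N.choose K) * X ^ (K - 1) * (1 - X) ^ (N - K) := by
  obtain ⟨k, rfl⟩ := Nat.exists_eq_add_of_le' hK
  obtain ⟨n, rfl⟩ := Nat.exists_eq_add_of_le' (hK.trans hKN)
  rw [← Finset.sum_Ico_add' (bernsteinPolynomial ℝ (n + 1)) k (n + 1) 1, derivative_sum]
  simp_rw [bernsteinPolynomial.derivative_succ, ← Finset.mul_sum, Nat.add_sub_cancel]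
  have h := Finset.sum_Ico_sub (bernsteinPolynomial ℝ n) (show k ≤ n + 1 by omega)
  have h' : ∑ i ∈ Finset.Ico k (n + 1),
      (bernsteinPolynomial ℝ n i - bernsteinPolynomial ℝ n (i + 1)) = bernsteinPolynomial ℝ n k := by
    rw [bernsteinPolynomial.eq_zero_of_lt ℝ (Nat.lt_succ_self n)] at h
    rw [← neg_inj, ← Finset.sum_neg_distrib]
    simpa using h
  rw [h', bernsteinPolynomial, Nat.add_sub_add_right, mul_comm ((k + 1 : ℕ) : ℝ)]
  have hc : ((n + 1 : ℕ) : ℝ[X]) * (n.choose k : ℝ[X]) =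
      C (((n + 1).choose (k + 1) : ℝ) * ((k + 1 : ℕ) : ℝ)) := by
    have := Nat.add_one_mul_choose_eq n k
    rw [← Nat.cast_mul, this]
    simp
  rw [← hc]
  ring

theorem measurable_orderStat {N K : ℕ} (hK : 1 ≤ K) (hKN : K ≤ N) :
    Measurable fun t : Fin N → ℝ => orderStat (fun i (t : Fin N → ℝ) => t i) K t := by
  refine measurable_of_Iic fun x => ?_
  have : (fun t : Fin N → ℝ => orderStat (fun i (t : Fin N → ℝ) => t i) K t) ⁻¹' Set.Iic x =
      {t : Fin N → ℝ | K ≤ Nat.card {i // t i ∈ Set.Iic x}} := by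
    ext t
    exact orderStat_le_iff hK hKN _ t x
  rw [this]
  exact measurableSet_setOf_le_card K measurableSet_Iic

theorem map_orderStat_pi_shiftedExp {N K : ℕ} (hK : 1 ≤ K) (hKN : K ≤ N) {l : ℝ} (hl : 0 < l)
    (c : ℝ) :
    (Measure.pi fun _ : Fin N => shiftedExp l c).map
        (fun t => orderStat (fun i (t : Fin N → ℝ) => t i) K t) =
      (volume.restrict (Set.Ioi c)).withDensity fun t => ENNReal.ofReal
        ((K : ℝ) * N.choose K * (1 - exp (-l * (t - c))) ^ (K - 1) *
          exp (-l * (t - c)) ^ (N - K) * (l * exp (-l * (t - c)))) := by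
  have := isProbabilityMeasure_shiftedExp hl c
  have hm := measurable_orderStat hK hKN
  have hprob := Measure.isProbabilityMeasure_map (μ := Measure.pi fun _ : Fin N => shiftedExp l c)
    hm.aemeasurable
  set G := ∑ m ∈ Finset.Ico K (N + 1), bernsteinPolynomial ℝ N m with hG
  have hG0 : G.eval 0 = 0 := by
    rw [hG, Polynomial.eval_finsetSum]
    refine Finset.sum_eq_zero fun m hm => ?_
    have : m ≠ 0 := by have := (Finset.mem_Ico.1 hm).1; omega
    simp [bernsteinPolynomial, this]
  refine Measure.ext_of_Iic _ _ fun x => ?_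
  have hpre : (fun t : Fin N → ℝ => orderStat (fun i (t : Fin N → ℝ) => t i) K t) ⁻¹' Set.Iic x =
      {t : Fin N → ℝ | K ≤ Nat.card {i // t i ∈ Set.Iic x}} := by
    ext t
    exact orderStat_le_iff hK hKN _ t x
  rw [Measure.map_apply hm measurableSet_Iic, hpre, ← ofReal_measureReal,
    pi_real_setOf_le_card K measurableSet_Iic, withDensity_apply _ measurableSet_Iic,
    Measure.restrict_restrict measurableSet_Iic, Set.Iic_inter_Ioi]
  rcases le_or_gt x c with hx | hx
  · rw [Set.Ioc_eq_empty hx.not_gt, measureReal_def, shiftedExp_Iic_of_le hx]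
    simp [← hG, hG0]
  · have hcont : Continuous fun t => (K : ℝ) * N.choose K * (1 - exp (-l * (t - c))) ^ (K - 1) *
          exp (-l * (t - c)) ^ (N - K) * (l * exp (-l * (t - c))) := by fun_prop
    have hd : ∀ t ∈ Set.uIcc c x, HasDerivAt (fun t => G.eval (1 - exp (-l * (t - c))))
        ((K : ℝ) * N.choose K * (1 - exp (-l * (t - c))) ^ (K - 1) *
          exp (-l * (t - c)) ^ (N - K) * (l * exp (-l * (t - c)))) t := fun t _ => by
      have h := (G.hasDerivAt (1 - exp (-l * (t - c)))).comp t
        ((hasDerivAt_exp_neg_mul_sub l c t).const_sub 1)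
      rw [hG, derivative_sum_bernsteinPolynomial hK hKN] at h
      refine h.congr_deriv ?_
      simp
    rw [← ofReal_integral_eq_lintegral_ofReal, ← intervalIntegral.integral_of_le hx.le,
      intervalIntegral.integral_eq_sub_of_hasDerivAt hd (hcont.intervalIntegrable _ _),
      shiftedExp_real_Iic hl hx.le]
    · simp [← hG, hG0]
    · exact hcont.integrableOn_Ioc
    · filter_upwards [ae_restrict_mem measurableSet_Ioc] with t ht
      have : exp (-l * (t - c)) ≤ 1 := exp_le_one_iff.2 (by nlinarith [ht.1])
      have : 0 ≤ 1 - exp (-l * (t - c)) := by linarith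
      simp only [Pi.zero_apply]
      positivity

theorem hasDerivAt_sq_mul_exp_antideriv {h : ℝ} (hh : 0 < h) (c t : ℝ) :
    HasDerivAt (fun t => -((t ^ 2 * h ^ 2 + 2 * t * h + 2) / h ^ 3 * exp (-h * (t - c))))
      (t ^ 2 * exp (-h * (t - c))) t := by
  have h1 : HasDerivAt (fun t : ℝ => (t ^ 2 * h ^ 2 + 2 * t * h + 2) / h ^ 3)
      ((2 * t * h ^ 2 + 2 * h) / h ^ 3) t := by
    have h2 := ((((hasDerivAt_pow 2 t).mul_const (h ^ 2)).add
      (((hasDerivAt_id t).const_mul 2).mul_const h)).add_const 2).div_const (h ^ 3)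
    refine h2.congr_deriv ?_
    simp
  refine (h1.mul (hasDerivAt_exp_neg_mul_sub h c t)).neg.congr_deriv ?_
  field_simp
  ring

theorem tendsto_sq_mul_exp_antideriv {h : ℝ} (hh : 0 < h) (c : ℝ) :
    Filter.Tendsto (fun t => -((t ^ 2 * h ^ 2 + 2 * t * h + 2) / h ^ 3 * exp (-h * (t - c))))
      Filter.atTop (nhds 0) := by
  have hlin : Filter.Tendsto (fun t : ℝ => h * t) Filter.atTop Filter.atTop :=
    Filter.tendsto_id.const_mul_atTop hh
  have hp := fun n => (tendsto_pow_mul_exp_neg_atTop_nhds_zero n).comp hlin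
  have key := ((((hp 2).add ((hp 1).const_mul 2)).add ((hp 0).const_mul 2)).mul_const
    (-(exp (h * c) / h ^ 3)))
  simp only [mul_zero, add_zero, zero_mul] at key
  refine key.congr fun t => ?_
  have : exp (-h * (t - c)) = exp (-(h * t)) * exp (h * c) := by
    rw [← exp_add]; ring_nf
  rw [this]
  simp only [Function.comp_apply]
  ring

theorem integrableOn_Ioi_sq_mul_exp {h : ℝ} (hh : 0 < h) (c : ℝ) :
    IntegrableOn (fun t => t ^ 2 * exp (-h * (t - c))) (Set.Ioi c) :=
  integrableOn_Ioi_deriv_of_nonneg' (fun t _ => hasDerivAt_sq_mul_exp_antideriv hh c t)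
    (fun t _ => by positivity) (tendsto_sq_mul_exp_antideriv hh c)

theorem integral_Ioi_sq_mul_exp {h : ℝ} (hh : 0 < h) (c : ℝ) :
    ∫ t in Set.Ioi c, t ^ 2 * exp (-h * (t - c)) =
      (c ^ 2 * h ^ 2 + 2 * c * h + 2) / h ^ 3 := by
  rw [integral_Ioi_of_hasDerivAt_of_nonneg' (fun t _ => hasDerivAt_sq_mul_exp_antideriv hh c t)
    (fun t _ => by positivity) (tendsto_sq_mul_exp_antideriv hh c)]
  simp

theorem lintegral_sq_orderStat_le {N K : ℕ} (hK : 1 ≤ K) (hKN : K ≤ N) {ls ld : ℝ}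
    (hls : 0 < ls) (hld : 0 < ld) (c : ℝ) :
    ∫⁻ z, {z : ℝ × (Fin N → ℝ) | orderStat (fun i (t : Fin N → ℝ) => t i) K z.2 ≤ z.1}.indicator
        (fun z => ENNReal.ofReal (orderStat (fun i (t : Fin N → ℝ) => t i) K z.2 ^ 2)) z
        ∂(shiftedExp ld c).prod (Measure.pi fun _ : Fin N => shiftedExp ls c) =
      ∫⁻ x in Set.Ioi c, ENNReal.ofReal
        ((K : ℝ) * N.choose K * (1 - exp (-ls * (x - c))) ^ (K - 1) *
          exp (-ls * (x - c)) ^ (N - K) * (ls * exp (-ls * (x - c))) *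
          (x ^ 2 * exp (-ld * (x - c)))) := by
  have := isProbabilityMeasure_shiftedExp hls c
  have := isProbabilityMeasure_shiftedExp hld c
  have hm := measurable_orderStat hK hKN
  set X : (Fin N → ℝ) → ℝ := fun t => orderStat (fun i (t : Fin N → ℝ) => t i) K t
  have hX2 : Measurable fun z : ℝ × (Fin N → ℝ) => X z.2 := hm.comp measurable_snd
  have hφ : Measurable fun x : ℝ => ENNReal.ofReal (x ^ 2) * shiftedExp ld c (Set.Ici x) := by
    have hanti : Antitone fun x : ℝ => shiftedExp ld c (Set.Ici x) := fun x y hxy =>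
      measure_mono (Set.Ici_subset_Ici.2 hxy)
    exact (by fun_prop : Measurable fun x : ℝ => ENNReal.ofReal (x ^ 2)).mul hanti.measurable
  have hinner : ∀ t : Fin N → ℝ, ∫⁻ d, {z : ℝ × (Fin N → ℝ) | X z.2 ≤ z.1}.indicator
      (fun z => ENNReal.ofReal (X z.2 ^ 2)) (d, t) ∂shiftedExp ld c =
      ENNReal.ofReal (X t ^ 2) * shiftedExp ld c (Set.Ici (X t)) := fun t => by
    rw [← lintegral_indicator_const measurableSet_Ici]
    rfl
  rw [lintegral_prod_symm _ ((by fun_prop : Measurable fun z : ℝ × (Fin N → ℝ) =>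
    ENNReal.ofReal (X z.2 ^ 2)).indicator (measurableSet_le hX2 measurable_fst)).aemeasurable]
  refine (lintegral_congr hinner).trans ?_
  rw [← lintegral_map hφ hm, map_orderStat_pi_shiftedExp hK hKN hls,
    lintegral_withDensity_eq_lintegral_mul _ (by fun_prop) hφ]
  refine setLIntegral_congr_fun measurableSet_Ioi fun x hx => ?_
  have hx' : c ≤ x := le_of_lt hx
  have : exp (-ls * (x - c)) ≤ 1 := exp_le_one_iff.2 (by nlinarith)
  have : 0 ≤ 1 - exp (-ls * (x - c)) := by linarith
  rw [Pi.mul_apply, shiftedExp_Ici hld hx', ← ENNReal.ofReal_mul (by positivity),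
    ← ENNReal.ofReal_mul (by positivity)]

theorem orderStat_density_mul_sq_mul_exp {N K : ℕ} (hK : 1 ≤ K) (hKN : K ≤ N) (ls ld c x : ℝ) :
    (K : ℝ) * N.choose K * (1 - exp (-ls * (x - c))) ^ (K - 1) *
        exp (-ls * (x - c)) ^ (N - K) * (ls * exp (-ls * (x - c))) *
        (x ^ 2 * exp (-ld * (x - c))) =
      ∑ j ∈ Finset.range K, (K : ℝ) * N.choose K * (K - 1).choose j * (-1) ^ j * ls *
        (x ^ 2 * exp (-(ls * ((N : ℝ) - K + 1 + j) + ld) * (x - c))) := by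
  have hexp : ∀ j : ℕ, exp (-(ls * ((N : ℝ) - K + 1 + j) + ld) * (x - c)) =
      exp (-ls * (x - c)) ^ j * exp (-ls * (x - c)) ^ (N - K) * exp (-ls * (x - c)) *
        exp (-ld * (x - c)) := fun j => by
    simp only [← exp_nat_mul, ← exp_add, Nat.cast_sub hKN]
    ring_nf
  have hbin := add_pow (-exp (-ls * (x - c))) 1 (K - 1)
  rw [Nat.sub_add_cancel hK, neg_add_eq_sub] at hbin
  rw [hbin]
  simp only [Finset.mul_sum, Finset.sum_mul]
  refine Finset.sum_congr rfl fun j _ => ?_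
  rw [hexp, neg_pow]
  ring

theorem cond_second_moment_orderStat_random_deadline
    {Ω : Type*} [MeasurableSpace Ω] (P : MeasureTheory.Measure Ω) [IsProbabilityMeasure P]
    (N K : ℕ) (hK : 1 ≤ K) (hKN : K ≤ N)
    (ls ld c : ℝ) (hls : 0 < ls) (hld : 0 < ld) (hc : 0 ≤ c)
    (T : Fin N → Ω → ℝ) (hT : ∀ i, Measurable (T i))
    (D : Ω → ℝ) (hD : Measurable D)
    (hlaw : MeasureTheory.Measure.map (fun ω => (D ω, fun i => T i ω)) P
      = (shiftedExp ld c).prod (MeasureTheory.Measure.pi (fun _ : Fin N => shiftedExp ls c)))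
    (B : ℕ → ℝ) (hB : ∀ j, B j = (K : ℝ) * (N.choose K : ℝ) * ((K - 1).choose j : ℝ) * (-1) ^ j)
    (H : ℕ → ℝ) (hH : ∀ j, H j = ls * ((N : ℝ) - K + 1 + j) + ld)
    (R : ℝ) (hR : R = (P {ω | orderStat T K ω ≤ D ω}).toReal) :
    (∫ ω, (orderStat T K ω) ^ 2 ∂(P[|{ω | orderStat T K ω ≤ D ω}]))
      = (1 / R) * ∑ j ∈ Finset.range K,
          B j * ls * (c ^ 2 * (H j) ^ 2 + 2 * c * H j + 2) / (H j) ^ 3 := by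
  have hm := measurable_orderStat hK hKN
  have hTm : Measurable fun ω => (fun i => T i ω) := measurable_pi_lambda _ hT
  have hX : Measurable (orderStat T K) := hm.comp hTm
  have hA : MeasurableSet {ω | orderStat T K ω ≤ D ω} := measurableSet_le hX hD
  have hE : MeasurableSet
      {z : ℝ × (Fin N → ℝ) | orderStat (fun i (t : Fin N → ℝ) => t i) K z.2 ≤ z.1} :=
    measurableSet_le (hm.comp measurable_snd) measurable_fst
  have hF : Measurable fun z : ℝ × (Fin N → ℝ) =>
      ENNReal.ofReal (orderStat (fun i (t : Fin N → ℝ) => t i) K z.2 ^ 2) :=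
    ((hm.comp measurable_snd).pow_const 2).ennreal_ofReal
  have hHpos : ∀ j, 0 < H j := fun j => by
    have : (K : ℝ) ≤ N := by exact_mod_cast hKN
    have : 0 ≤ (N : ℝ) - K + 1 + j := by
      have : (0 : ℝ) ≤ j := j.cast_nonneg
      linarith
    rw [hH]
    positivity
  have hlint : ∫⁻ ω in {ω | orderStat T K ω ≤ D ω}, ENNReal.ofReal (orderStat T K ω ^ 2) ∂P =
      ∫⁻ z, {z : ℝ × (Fin N → ℝ) |
        orderStat (fun i (t : Fin N → ℝ) => t i) K z.2 ≤ z.1}.indicator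
        (fun z => ENNReal.ofReal (orderStat (fun i (t : Fin N → ℝ) => t i) K z.2 ^ 2)) z
        ∂(shiftedExp ld c).prod (Measure.pi fun _ : Fin N => shiftedExp ls c) := by
    rw [← hlaw, lintegral_map (hF.indicator hE) (hD.prodMk hTm), ← lintegral_indicator hA]
    rfl
  have hset : ∫ ω in {ω | orderStat T K ω ≤ D ω}, orderStat T K ω ^ 2 ∂P =
      ∑ j ∈ Finset.range K, B j * ls * (c ^ 2 * (H j) ^ 2 + 2 * c * H j + 2) / (H j) ^ 3 := by
    rw [integral_eq_lintegral_of_nonneg_ae (Filter.Eventually.of_forall fun ω => sq_nonneg _)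
      (hX.pow_const 2).aestronglyMeasurable, hlint, lintegral_sq_orderStat_le hK hKN hls hld,
      ← integral_eq_lintegral_of_nonneg_ae]
    · simp_rw [orderStat_density_mul_sq_mul_exp hK hKN, ← hH, ← hB]
      rw [integral_finsetSum _ fun j _ => (integrableOn_Ioi_sq_mul_exp (hHpos j) c).const_mul _]
      refine Finset.sum_congr rfl fun j _ => ?_
      rw [integral_const_mul, integral_Ioi_sq_mul_exp (hHpos j), mul_div_assoc]
    · filter_upwards [ae_restrict_mem measurableSet_Ioi] with x hx
      have hx' : c < x := hx
      have : exp (-ls * (x - c)) ≤ 1 := exp_le_one_iff.2 (by nlinarith)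
      have : 0 ≤ 1 - exp (-ls * (x - c)) := by linarith
      simp only [Pi.zero_apply]
      positivity
    · exact Continuous.aestronglyMeasurable (by fun_prop)
  rw [ProbabilityTheory.cond, integral_smul_measure, hset, hR, ENNReal.toReal_inv, one_div,
    smul_eq_mul]
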